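/- Let N be a positive integer and let A¹ be the (N+1)×(N+1) isomerisation matrix. Let E be the (N+1)×(N+1) shift matrix with E_{i,j} = 1 if j = i+1 and 0 otherwise, and let W be the lower-triangular matrix with W_{m,n} = (−1)^{m−n} C(N−n, m−n) / n! for m ≥ n and W_{m,n} = 0 for m < n. Then A¹ · W = W · E; since W is invertible, this exhibits A¹ = W E W⁻¹ as the Jordan form of A¹. -/

import Mathlib

/-!
Column `n` of `W` is the coefficient vector of `Xⁿ(1 - X)ᴺ⁻ⁿ / n!`, and `A¹` is the matrix, in the
monomial basis of the polynomials of degree at most `N`, of the operator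
`p ↦ (1 - X)² p' + N(1 - X) p`. By the product rule this operator sends `Xⁿ(1 - X)ᴺ⁻ⁿ` to
`n Xⁿ⁻¹(1 - X)ᴺ⁻ⁿ⁺¹`. After division by `n!` it therefore sends column `n` to column `n - 1`, and
column `0` to zero, which is `A¹ W = W E`. Moreover `W` is lower triangular with diagonal entries
`1 / n!`, hence invertible.
-/

def isoA1 (N : ℕ) : Matrix (Fin (N+1)) (Fin (N+1)) ℝ := fun k l =>
  if (k : ℕ) = (l : ℕ) then (N : ℝ) - 2 * ((l : ℕ) : ℝ)
  else if (k : ℕ) + 1 = (l : ℕ) then ((l : ℕ) : ℝ)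
  else if (k : ℕ) = (l : ℕ) + 1 then -(N : ℝ) + ((l : ℕ) : ℝ)
  else 0

/-- The shift matrix `E`: `E_{i,j} = 1` if `j = i+1` and `0` otherwise. -/
def shiftE (N : ℕ) : Matrix (Fin (N+1)) (Fin (N+1)) ℝ := fun i j =>
  if (j : ℕ) = (i : ℕ) + 1 then 1 else 0

/-- The lower-triangular matrix `W` with `W_{m,n} = (−1)^{m−n} C(N−n, m−n)/n!`
for `m ≥ n` and `0` otherwise. -/
noncomputable def isoW (N : ℕ) : Matrix (Fin (N+1)) (Fin (N+1)) ℝ := fun m n =>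
  if (n : ℕ) ≤ (m : ℕ) then
    (-1 : ℝ) ^ ((m : ℕ) - (n : ℕ)) * ((N - (n : ℕ)).choose ((m : ℕ) - (n : ℕ)) : ℝ)
      / ((n : ℕ).factorial : ℝ)
  else 0

section PolynomialModel

open Polynomial Matrix

variable {R : Type*} [CommRing R]

/-- The first-order differential operator `p ↦ (1 - X)² p' + c (1 - X) p` on polynomials, which
for `c = N` is represented by `A¹` on coefficients. -/
noncomputable def isoOperator (c : R) : R[X] →ₗ[R] R[X] :=
  LinearMap.mulLeft R ((1 - X) ^ 2) ∘ₗ derivative + LinearMap.mulLeft R (C c * (1 - X))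

lemma isoOperator_apply (c : R) (p : R[X]) :
    isoOperator c p = (1 - X) ^ 2 * derivative p + C c * (1 - X) * p :=
  rfl

lemma natCast_mul_X_pow_pred_mul_X (n : ℕ) : (n : R[X]) * X ^ (n - 1) * X = (n : R[X]) * X ^ n := by
  cases n with
  | zero => simp
  | succ n => rw [Nat.add_sub_cancel, mul_assoc, ← pow_succ]

lemma one_sub_X_mul_derivative_one_sub_X_pow (a : ℕ) :
    (1 - X) * derivative ((1 - X : R[X]) ^ a) = -((a : R[X]) * (1 - X) ^ a) := by
  cases a with
  | zero => simp
  | succ a =>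
    simp only [derivative_pow_succ, derivative_sub, derivative_one, derivative_X, map_add,
      map_natCast, map_one, Nat.cast_add, Nat.cast_one]
    ring

lemma isoOperator_X_pow (c : R) (n : ℕ) :
    isoOperator c (X ^ n) =
      C (n : R) * X ^ (n - 1) + C (c - 2 * n) * X ^ n + C (n - c) * X ^ (n + 1) := by
  have hX := natCast_mul_X_pow_pred_mul_X (R := R) n
  simp only [isoOperator_apply, derivative_X_pow, map_sub, map_mul, map_natCast, map_ofNat]
  linear_combination (X - 2) * hX

lemma isoOperator_X_pow_mul_one_sub_X_pow (n a : ℕ) :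
    isoOperator ((n + a : ℕ) : R) (X ^ n * (1 - X) ^ a) =
      (n : R[X]) * (X ^ (n - 1) * (1 - X) ^ (a + 1)) := by
  have hX := natCast_mul_X_pow_pred_mul_X (R := R) n
  have hY := one_sub_X_mul_derivative_one_sub_X_pow (R := R) a
  simp only [isoOperator_apply, derivative_mul, derivative_X_pow, map_add, map_natCast,
    Nat.cast_add]
  linear_combination (1 - X) * X ^ n * hY - (1 - X) ^ (a + 1) * hX

lemma coeff_one_sub_X_pow (a k : ℕ) :
    ((1 - X : R[X]) ^ a).coeff k = (-1) ^ k * (a.choose k : R) := by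
  have hcomp : (1 - X : R[X]) ^ a = ((1 + X) ^ a).comp (C (-1) * X) := by
    simp [sub_eq_add_neg]
  rw [hcomp, comp_C_mul_X_coeff, coeff_one_add_X_pow, mul_comm]

lemma isoA1_apply_eq_coeff (N : ℕ) (k l : Fin (N + 1)) :
    isoA1 N k l = (isoOperator (N : ℝ) (X ^ (l : ℕ))).coeff k := by
  simp only [isoA1, isoOperator_X_pow, coeff_add, coeff_C_mul_X_pow]
  -- For `l = 0` the truncated exponent `l - 1` coincides with `l`, but its coefficient vanishes.
  obtain hl | hl := Nat.eq_zero_or_pos (l : ℕ)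
  · split_ifs <;> first | omega | simp [hl]
  · split_ifs <;> first | omega | ring

lemma isoA1_mulVec_coeff {N : ℕ} {p : ℝ[X]} (hp : p.natDegree ≤ N) :
    (isoA1 N *ᵥ fun l => p.coeff l) = fun k : Fin (N + 1) => (isoOperator (N : ℝ) p).coeff k := by
  ext k
  have hsum : p = ∑ l : Fin (N + 1), p.coeff l • X ^ (l : ℕ) := by
    simp only [smul_eq_C_mul, Fin.sum_univ_eq_sum_range (fun l => C (p.coeff l) * X ^ l)]
    exact p.as_sum_range_C_mul_X_pow' (Nat.lt_succ_of_le hp)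
  calc ∑ l : Fin (N + 1), isoA1 N k l * p.coeff l
      = ∑ l : Fin (N + 1), p.coeff l * (isoOperator (N : ℝ) (X ^ (l : ℕ))).coeff k := by
        simp only [isoA1_apply_eq_coeff, mul_comm]
    _ = (isoOperator (N : ℝ) (∑ l : Fin (N + 1), p.coeff l • X ^ (l : ℕ))).coeff k := by
        simp only [map_sum, map_smul, finsetSum_coeff, coeff_smul, smul_eq_mul]
    _ = (isoOperator (N : ℝ) p).coeff k := by rw [← hsum]

/-- The generating polynomial `Xⁿ(1 - X)ᴺ⁻ⁿ / n!` of column `n` of `W`, meaningful for `n ≤ N`. -/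
noncomputable def isoWColumn (N n : ℕ) : ℝ[X] :=
  (n.factorial : ℝ)⁻¹ • (X ^ n * (1 - X) ^ (N - n))

lemma natDegree_isoWColumn_le {N n : ℕ} (hn : n ≤ N) : (isoWColumn N n).natDegree ≤ N := by
  have hdeg : (X ^ n * (1 - X : ℝ[X]) ^ (N - n)).natDegree ≤ n + (N - n) := by compute_degree
  exact (natDegree_smul_le _ _).trans (hdeg.trans_eq (Nat.add_sub_of_le hn))

lemma isoW_apply_eq_coeff (N : ℕ) (m n : Fin (N + 1)) :
    isoW N m n = (isoWColumn N n).coeff m := by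
  simp only [isoW, isoWColumn, coeff_smul, coeff_X_pow_mul', coeff_one_sub_X_pow, smul_eq_mul,
    mul_ite, mul_zero, div_eq_inv_mul]

lemma isoOperator_isoWColumn_zero (N : ℕ) : isoOperator (N : ℝ) (isoWColumn N 0) = 0 := by
  simpa [isoWColumn] using isoOperator_X_pow_mul_one_sub_X_pow (R := ℝ) 0 N

lemma isoOperator_isoWColumn_succ {N n : ℕ} (hn : n + 1 ≤ N) :
    isoOperator (N : ℝ) (isoWColumn N (n + 1)) = isoWColumn N n := by
  obtain ⟨a, rfl⟩ := Nat.exists_eq_add_of_le hn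
  have hfac : ((n + 1).factorial : ℝ)⁻¹ * (n + 1 : ℕ) = (n.factorial : ℝ)⁻¹ := by
    rw [Nat.factorial_succ]
    push_cast
    field_simp
  have hexp : n + 1 + a - n = a + 1 := by omega
  rw [isoWColumn, isoWColumn, map_smul, Nat.add_sub_cancel_left,
    isoOperator_X_pow_mul_one_sub_X_pow, Nat.add_sub_cancel, hexp, ← nsmul_eq_mul,
    ← Nat.cast_smul_eq_nsmul ℝ, smul_smul, hfac]

lemma mul_shiftE_apply_zero {ι : Type*} {N : ℕ} (M : Matrix ι (Fin (N + 1)) ℝ) (i : ι) :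
    (M * shiftE N) i 0 = 0 := by
  simp [Matrix.mul_apply, shiftE]

lemma mul_shiftE_apply_succ {ι : Type*} {N : ℕ} (M : Matrix ι (Fin (N + 1)) ℝ)
    (i : ι) (j : Fin N) : (M * shiftE N) i j.succ = M i j.castSucc := by
  have hE (l : Fin (N + 1)) : shiftE N l j.succ = if j.castSucc = l then 1 else 0 := by
    simp [shiftE, Fin.ext_iff]
  simp [Matrix.mul_apply, hE]

lemma isoA1_mul_isoW_apply (N : ℕ) (k n : Fin (N + 1)) :
    (isoA1 N * isoW N) k n = (isoOperator (N : ℝ) (isoWColumn N n)).coeff k := by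
  have hdeg := natDegree_isoWColumn_le (Nat.le_of_lt_succ n.isLt)
  simpa only [Matrix.mul_apply, isoW_apply_eq_coeff, mulVec, dotProduct] using
    congrFun (isoA1_mulVec_coeff hdeg) k

lemma isoA1_mul_isoW (N : ℕ) : isoA1 N * isoW N = isoW N * shiftE N := by
  ext k n
  rw [isoA1_mul_isoW_apply]
  cases n using Fin.cases with
  | zero => rw [Fin.val_zero, isoOperator_isoWColumn_zero, mul_shiftE_apply_zero, coeff_zero]
  | succ n =>
    rw [Fin.val_succ, isoOperator_isoWColumn_succ n.isLt, mul_shiftE_apply_succ,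
      isoW_apply_eq_coeff, Fin.val_castSucc]

lemma isLowerTriangular_isoW (N : ℕ) : (isoW N).IsLowerTriangular := fun _ _ hij =>
  if_neg (not_le.mpr hij)

lemma isoW_apply_self (N : ℕ) (n : Fin (N + 1)) : isoW N n n = ((n : ℕ).factorial : ℝ)⁻¹ := by
  simp [isoW]

lemma isUnit_det_isoW (N : ℕ) : IsUnit (isoW N).det := by
  rw [det_of_isLowerTriangular _ (isLowerTriangular_isoW N), isUnit_iff_ne_zero,
    Finset.prod_ne_zero_iff]
  intro n _
  rw [isoW_apply_self]
  positivity

end PolynomialModel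

/-- The Jordan form of `A¹`: `A¹·W = W·E`, and since `W` is invertible,
`A¹ = W·E·W⁻¹`. -/
theorem isoA1_jordan_form (N : ℕ) (hN : 0 < N) :
    isoA1 N * isoW N = isoW N * shiftE N ∧
    IsUnit (isoW N) ∧
    isoA1 N = isoW N * shiftE N * (isoW N)⁻¹ := by
  have hdet := isUnit_det_isoW N
  refine ⟨isoA1_mul_isoW N, (Matrix.isUnit_iff_isUnit_det _).mpr hdet, ?_⟩
  rw [← isoA1_mul_isoW, Matrix.mul_nonsing_inv_cancel_right _ _ hdet]
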